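/- In the labelled sequent calculus G3Q.K, every rule is height-preserving invertible: if the conclusion of a rule instance is derivable with height at most n, then each of its premisses is derivable with height at most n (after renaming eigenvariables if necessary). -/

import Mathlib

/-- Formulas of quantified modal logic (predicates named by ℕ, variables ℕ). -/
inductive Fml where
  | atom : ℕ → List ℕ → Fml
  | bot : Fml
  | and : Fml → Fml → Fml
  | or : Fml → Fml → Fml
  | imp : Fml → Fml → Fml
  | all : ℕ → Fml → Fml
  | ex : ℕ → Fml → Fml
  | box : Fml → Fml
  | dia : Fml → Fml
deriving DecidableEq

/-- A varying-domain quantified modal model over worlds `W` and objects `D`. -/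
structure Model (W D : Type) where
  R : W → W → Prop
  dom : W → Set D
  V : ℕ → W → List D → Prop

/-- Satisfaction of a formula at a world under an assignment. -/
def Sat {W D : Type} (M : Model W D) (σ : ℕ → D) (w : W) : Fml → Prop
  | .atom P args => M.V P w (args.map σ)
  | .bot => False
  | .and A B => Sat M σ w A ∧ Sat M σ w B
  | .or A B => Sat M σ w A ∨ Sat M σ w B
  | .imp A B => Sat M σ w A → Sat M σ w B
  | .all x A => ∀ o ∈ M.dom w, Sat M (Function.update σ x o) w A
  | .ex x A => ∃ o ∈ M.dom w, Sat M (Function.update σ x o) w A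
  | .box A => ∀ v, M.R w v → Sat M σ v A
  | .dia A => ∃ v, M.R w v ∧ Sat M σ v A

/-- A quantified modal frame. -/
structure Frame (W D : Type) where
  R : W → W → Prop
  dom : W → Set D

/-- Validity on a frame: truth at every world under every assignment in
every model based on the frame. -/
def ValidOn {W D : Type} (F : Frame W D) (A : Fml) : Prop :=
  ∀ V : ℕ → W → List D → Prop, ∀ σ : ℕ → D, ∀ w : W,
    Sat (Model.mk F.R F.dom V) σ w A

/-- Naive substitution of variable `y` for free occurrences of `x`
(capture-avoiding provided `y` is fresh). -/
def Fml.substV (x y : ℕ) : Fml → Fml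
  | .atom P args => .atom P (args.map fun z => if z = x then y else z)
  | .bot => .bot
  | .and A B => .and (A.substV x y) (B.substV x y)
  | .or A B => .or (A.substV x y) (B.substV x y)
  | .imp A B => .imp (A.substV x y) (B.substV x y)
  | .all z A => if z = x then .all z A else .all z (A.substV x y)
  | .ex z A => if z = x then .ex z A else .ex z (A.substV x y)
  | .box A => .box (A.substV x y)
  | .dia A => .dia (A.substV x y)

/-- All variables (free or bound) occurring in a formula. -/
def Fml.vars : Fml → Set ℕ
  | .atom _ args => {z | z ∈ args}
  | .bot => ∅
  | .and A B => A.vars ∪ B.vars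
  | .or A B => A.vars ∪ B.vars
  | .imp A B => A.vars ∪ B.vars
  | .all z A => insert z A.vars
  | .ex z A => insert z A.vars
  | .box A => A.vars
  | .dia A => A.vars

/-- Items occurring in antecedents of labelled sequents: labelled formulas
`w : A`, domain atoms `x ∈ w`, and relational atoms `w R v`
(labels and variables are both `ℕ`). -/
inductive LSForm where
  | lab : ℕ → Fml → LSForm
  | mem : ℕ → ℕ → LSForm
  | rel : ℕ → ℕ → LSForm
deriving DecidableEq

/-- Variables occurring in an antecedent item. -/
def LSForm.vars : LSForm → Set ℕ
  | .lab _ A => A.vars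
  | .mem x _ => {x}
  | .rel _ _ => ∅

/-- Labels occurring in an antecedent item. -/
def LSForm.labs : LSForm → Set ℕ
  | .lab w _ => {w}
  | .mem _ w => {w}
  | .rel w v => {w, v}

/-- Variables occurring in a sequent (succedents are multisets of labelled
formulas, coded as pairs `(label, formula)`). -/
def seqVars (Γ : Multiset LSForm) (Δ : Multiset (ℕ × Fml)) : Set ℕ :=
  {x | (∃ E ∈ Γ, x ∈ E.vars) ∨ (∃ p ∈ Δ, x ∈ (Prod.snd p).vars)}

/-- Labels occurring in a sequent. -/
def seqLabs (Γ : Multiset LSForm) (Δ : Multiset (ℕ × Fml)) : Set ℕ :=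
  {w | (∃ E ∈ Γ, w ∈ E.labs) ∨ (∃ p ∈ Δ, Prod.fst p = w)}

/-- `Der n Γ Δ`: the labelled sequent `Γ ⇒ Δ` is derivable in the labelled
calculus G3Q.K with height at most `n`. -/
inductive Der : ℕ → Multiset LSForm → Multiset (ℕ × Fml) → Prop where
  | init (n : ℕ) (w P : ℕ) (args : List ℕ) (Γ : Multiset LSForm) (Δ : Multiset (ℕ × Fml)) :
      Der n (.lab w (.atom P args) ::ₘ Γ) ((w, .atom P args) ::ₘ Δ)
  | lbot (n w : ℕ) (Γ : Multiset LSForm) (Δ : Multiset (ℕ × Fml)) :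
      Der n (.lab w .bot ::ₘ Γ) Δ
  | land {n : ℕ} {w : ℕ} {A B : Fml} {Γ : Multiset LSForm} {Δ : Multiset (ℕ × Fml)} :
      Der n (.lab w A ::ₘ .lab w B ::ₘ Γ) Δ →
      Der (n + 1) (.lab w (.and A B) ::ₘ Γ) Δ
  | rand {n w} {A B : Fml} {Γ : Multiset LSForm} {Δ : Multiset (ℕ × Fml)} :
      Der n Γ ((w, A) ::ₘ Δ) → Der n Γ ((w, B) ::ₘ Δ) →
      Der (n + 1) Γ ((w, .and A B) ::ₘ Δ)
  | lor {n w} {A B : Fml} {Γ : Multiset LSForm} {Δ : Multiset (ℕ × Fml)} :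
      Der n (.lab w A ::ₘ Γ) Δ → Der n (.lab w B ::ₘ Γ) Δ →
      Der (n + 1) (.lab w (.or A B) ::ₘ Γ) Δ
  | ror {n w} {A B : Fml} {Γ : Multiset LSForm} {Δ : Multiset (ℕ × Fml)} :
      Der n Γ ((w, A) ::ₘ (w, B) ::ₘ Δ) →
      Der (n + 1) Γ ((w, .or A B) ::ₘ Δ)
  | limp {n w} {A B : Fml} {Γ : Multiset LSForm} {Δ : Multiset (ℕ × Fml)} :
      Der n Γ ((w, A) ::ₘ Δ) → Der n (.lab w B ::ₘ Γ) Δ →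
      Der (n + 1) (.lab w (.imp A B) ::ₘ Γ) Δ
  | rimp {n w} {A B : Fml} {Γ : Multiset LSForm} {Δ : Multiset (ℕ × Fml)} :
      Der n (.lab w A ::ₘ Γ) ((w, B) ::ₘ Δ) →
      Der (n + 1) Γ ((w, .imp A B) ::ₘ Δ)
  | lall {n w x y} {A : Fml} {Γ : Multiset LSForm} {Δ : Multiset (ℕ × Fml)} :
      Der n (.lab w (A.substV x y) ::ₘ .mem y w ::ₘ .lab w (.all x A) ::ₘ Γ) Δ →
      Der (n + 1) (.mem y w ::ₘ .lab w (.all x A) ::ₘ Γ) Δ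
  | rall {n w x z} {A : Fml} {Γ : Multiset LSForm} {Δ : Multiset (ℕ × Fml)} :
      z ∉ seqVars Γ ((w, .all x A) ::ₘ Δ) →
      Der n (.mem z w ::ₘ Γ) ((w, A.substV x z) ::ₘ Δ) →
      Der (n + 1) Γ ((w, .all x A) ::ₘ Δ)
  | lex {n w x z} {A : Fml} {Γ : Multiset LSForm} {Δ : Multiset (ℕ × Fml)} :
      z ∉ seqVars (.lab w (.ex x A) ::ₘ Γ) Δ →
      Der n (.mem z w ::ₘ .lab w (A.substV x z) ::ₘ Γ) Δ →
      Der (n + 1) (.lab w (.ex x A) ::ₘ Γ) Δ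
  | rex {n w x y} {A : Fml} {Γ : Multiset LSForm} {Δ : Multiset (ℕ × Fml)} :
      Der n (.mem y w ::ₘ Γ) ((w, A.substV x y) ::ₘ (w, .ex x A) ::ₘ Δ) →
      Der (n + 1) (.mem y w ::ₘ Γ) ((w, .ex x A) ::ₘ Δ)
  | lbox {n w v} {A : Fml} {Γ : Multiset LSForm} {Δ : Multiset (ℕ × Fml)} :
      Der n (.lab v A ::ₘ .rel w v ::ₘ .lab w (.box A) ::ₘ Γ) Δ →
      Der (n + 1) (.rel w v ::ₘ .lab w (.box A) ::ₘ Γ) Δ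
  | rbox {n w u} {A : Fml} {Γ : Multiset LSForm} {Δ : Multiset (ℕ × Fml)} :
      u ∉ seqLabs Γ ((w, .box A) ::ₘ Δ) →
      Der n (.rel w u ::ₘ Γ) ((u, A) ::ₘ Δ) →
      Der (n + 1) Γ ((w, .box A) ::ₘ Δ)
  | ldia {n w u} {A : Fml} {Γ : Multiset LSForm} {Δ : Multiset (ℕ × Fml)} :
      u ∉ seqLabs (.lab w (.dia A) ::ₘ Γ) Δ →
      Der n (.rel w u ::ₘ .lab u A ::ₘ Γ) Δ →
      Der (n + 1) (.lab w (.dia A) ::ₘ Γ) Δ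
  | rdia {n w v} {A : Fml} {Γ : Multiset LSForm} {Δ : Multiset (ℕ × Fml)} :
      Der n (.rel w v ::ₘ Γ) ((w, .dia A) ::ₘ (v, A) ::ₘ Δ) →
      Der (n + 1) (.rel w v ::ₘ Γ) ((w, .dia A) ::ₘ Δ)

/-!
Rules that repeat their principal part in the premisses are inverted by height-preserving weakening.
A rule that consumes its principal formula `F` is inverted by strong induction on the height. Either
the last inference of the given derivation has `F` as its principal formula, and then its premisses
agree with the wanted ones up to the name of the eigenvariable; or `F` lies in its context, and then
it can be applied after inverting its premisses, its eigenvariable having been chosen fresh for the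
sequent that replaces `F`. Both cases rest on height-preserving renaming, which is restricted to
permutations of the names: these also act on bound variables and respect every rule.
-/

/-- A labelled sequent `Γ ⇒ Δ`. Taking a pair of multisets makes `+` the juxtaposition of sequents
and `≤` the inclusion of one sequent in another. -/
abbrev Sequent : Type := Multiset LSForm × Multiset (ℕ × Fml)

/-- The names subject to renaming: `Sum.inl` for variables, `Sum.inr` for labels. -/
abbrev Name : Type := ℕ ⊕ ℕ

/-- The names occurring, free or bound, in a sequent. -/
def Sequent.names (S : Sequent) : Set Name :=
  Sum.inl '' seqVars S.1 S.2 ∪ Sum.inr '' seqLabs S.1 S.2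

/-- The eigenvariable condition: the eigenname `e` of a rule instance, if it has one, does not
occur in `S`. -/
@[simp]
def Fresh (e : Option Name) (S : Sequent) : Prop :=
  ∀ a ∈ e, a ∉ S.names

/-- `Der` as a predicate on sequents. -/
def Derivable (n : ℕ) (S : Sequent) : Prop :=
  Der n S.1 S.2

/-- A labelled formula together with the side of the sequent on which it stands. -/
inductive SignedFml where
  | ante : ℕ → Fml → SignedFml
  | succ : ℕ → Fml → SignedFml

/-- The sequent consisting of a single signed formula. -/
@[simp]
def SignedFml.toSequent : SignedFml → Sequent
  | .ante w A => ({.lab w A}, 0)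
  | .succ w A => (0, {(w, A)})

/-- The rules that consume their principal formula: `Decomp F e Qs` says that `F + C` follows from
the sequents `Q + C` with `Q ∈ Qs`, for every context `C`, provided the eigenname `e` is fresh
for `F + C`. -/
inductive Decomp : SignedFml → Option Name → List Sequent → Prop where
  | land (w : ℕ) (A B : Fml) :
      Decomp (.ante w (.and A B)) none [({.lab w A, .lab w B}, 0)]
  | rand (w : ℕ) (A B : Fml) :
      Decomp (.succ w (.and A B)) none [(0, {(w, A)}), (0, {(w, B)})]
  | lor (w : ℕ) (A B : Fml) :
      Decomp (.ante w (.or A B)) none [({.lab w A}, 0), ({.lab w B}, 0)]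
  | ror (w : ℕ) (A B : Fml) :
      Decomp (.succ w (.or A B)) none [(0, {(w, A), (w, B)})]
  | limp (w : ℕ) (A B : Fml) :
      Decomp (.ante w (.imp A B)) none [(0, {(w, A)}), ({.lab w B}, 0)]
  | rimp (w : ℕ) (A B : Fml) :
      Decomp (.succ w (.imp A B)) none [({.lab w A}, {(w, B)})]
  | rall (w x z : ℕ) (A : Fml) :
      Decomp (.succ w (.all x A)) (some (.inl z)) [({.mem z w}, {(w, A.substV x z)})]
  | lex (w x z : ℕ) (A : Fml) :
      Decomp (.ante w (.ex x A)) (some (.inl z)) [({.mem z w, .lab w (A.substV x z)}, 0)]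
  | rbox (w u : ℕ) (A : Fml) :
      Decomp (.succ w (.box A)) (some (.inr u)) [({.rel w u}, {(u, A)})]
  | ldia (w u : ℕ) (A : Fml) :
      Decomp (.ante w (.dia A)) (some (.inr u)) [({.rel w u, .lab u A}, 0)]

/-- The rules that repeat their principal part: `Cumulative P Qs` says that `P + C` follows from the
sequents `Q + P + C` with `Q ∈ Qs`, for every context `C`. The axioms are those with `Qs = []`. -/
inductive Cumulative : Sequent → List Sequent → Prop where
  | init (w P : ℕ) (args : List ℕ) :
      Cumulative ({.lab w (.atom P args)}, {(w, .atom P args)}) []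
  | lbot (w : ℕ) :
      Cumulative ({.lab w .bot}, 0) []
  | lall (w x y : ℕ) (A : Fml) :
      Cumulative ({.mem y w, .lab w (.all x A)}, 0) [({.lab w (A.substV x y)}, 0)]
  | rex (w x y : ℕ) (A : Fml) :
      Cumulative ({.mem y w}, {(w, .ex x A)}) [(0, {(w, A.substV x y)})]
  | lbox (w v : ℕ) (A : Fml) :
      Cumulative ({.rel w v, .lab w (.box A)}, 0) [({.lab v A}, 0)]
  | rdia (w v : ℕ) (A : Fml) :
      Cumulative ({.rel w v}, {(w, .dia A)}) [(0, {(v, A)})]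

/-- The rules of G3Q.K without their context: principal part, eigenname, and active parts of the
premisses. -/
inductive Rule : Sequent → Option Name → List Sequent → Prop where
  | decomp {F : SignedFml} {e : Option Name} {Qs : List Sequent} :
      Decomp F e Qs → Rule F.toSequent e Qs
  | cumulative {P : Sequent} {Qs : List Sequent} :
      Cumulative P Qs → Rule P none (Qs.map (· + P))

section Names

theorem Fml.finite_vars (A : Fml) : A.vars.Finite := by
  induction A with
  | atom _ args => exact List.finite_toSet args
  | _ => simp_all [Fml.vars]

theorem LSForm.finite_vars (E : LSForm) : E.vars.Finite := by
  cases E <;> simp [LSForm.vars, Fml.finite_vars]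

theorem LSForm.finite_labs (E : LSForm) : E.labs.Finite := by
  cases E <;> simp [LSForm.labs]

theorem finite_seqVars (Γ : Multiset LSForm) (Δ : Multiset (ℕ × Fml)) : (seqVars Γ Δ).Finite := by
  have hΓ := (Multiset.finite_toSet Γ).biUnion fun E _ => E.finite_vars
  have hΔ := (Multiset.finite_toSet Δ).biUnion fun p _ => p.2.finite_vars
  exact (hΓ.union hΔ).subset fun x hx => by simpa [seqVars] using hx

theorem finite_seqLabs (Γ : Multiset LSForm) (Δ : Multiset (ℕ × Fml)) : (seqLabs Γ Δ).Finite := by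
  have hΓ := (Multiset.finite_toSet Γ).biUnion fun E _ => E.finite_labs
  have hΔ := (Multiset.finite_toSet Δ).image Prod.fst
  exact (hΓ.union hΔ).subset fun x hx => by simpa [seqLabs] using hx

namespace Sequent

theorem finite_names (S : Sequent) : S.names.Finite :=
  ((finite_seqVars S.1 S.2).image _).union ((finite_seqLabs S.1 S.2).image _)

@[simp]
theorem inl_mem_names {x : ℕ} {S : Sequent} : Sum.inl x ∈ S.names ↔ x ∈ seqVars S.1 S.2 := by
  simp [names]

@[simp]
theorem inr_mem_names {w : ℕ} {S : Sequent} : Sum.inr w ∈ S.names ↔ w ∈ seqLabs S.1 S.2 := by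
  simp [names]

theorem names_add (S T : Sequent) : (S + T).names = S.names ∪ T.names := by
  ext (x | w) <;>
    simp only [inl_mem_names, inr_mem_names, Set.mem_union, seqVars, seqLabs, Set.mem_ofPred_eq,
      Prod.fst_add, Prod.snd_add, Multiset.mem_add, or_and_right, exists_or] <;>
    exact or_or_or_comm

end Sequent

theorem Fml.vars_substV_subset (x y : ℕ) (A : Fml) : (A.substV x y).vars ⊆ insert y A.vars := by
  intro v
  induction A <;> simp only [Fml.substV] <;> (try split_ifs) <;>
    simp only [Fml.vars, Set.mem_ofPred_eq, List.mem_map, Set.mem_insert_iff, Set.mem_union]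
      at * <;>
    grind

end Names

section Inference

variable {n : ℕ} {P C : Sequent} {F : SignedFml} {e : Option Name} {Qs : List Sequent}

theorem Decomp.ne_nil (hF : Decomp F e Qs) : Qs ≠ [] := by
  cases hF <;> simp

theorem Decomp.derivable (hF : Decomp F e Qs)
    (he : Fresh e (F.toSequent + C)) (hQs : ∀ Q ∈ Qs, Derivable n (Q + C)) :
    Derivable (n + 1) (F.toSequent + C) := by
  cases hF <;>
    simp_all only [Derivable, Fresh, SignedFml.toSequent, List.forall_mem_cons, List.not_mem_nil,
      Option.mem_some_iff, forall_eq', Sequent.inl_mem_names, Sequent.inr_mem_names,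
      Prod.fst_add, Prod.snd_add, zero_add, Multiset.insert_eq_cons, Multiset.cons_add,
      Multiset.singleton_add]
  case land => exact .land hQs.1
  case rand => exact .rand hQs.1 hQs.2.1
  case lor => exact .lor hQs.1 hQs.2.1
  case ror => exact .ror hQs.1
  case limp => exact .limp hQs.1 hQs.2.1
  case rimp => exact .rimp hQs.1
  case rall => exact .rall he hQs.1
  case lex => exact .lex he hQs.1
  case rbox => exact .rbox he hQs.1
  case ldia => exact .ldia he hQs.1

-- The premiss height is `∃ k, k + 1 = n` because axioms, without premisses, have every height `n`.
theorem Cumulative.derivable (hP : Cumulative P Qs)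
    (hQs : ∀ Q ∈ Qs, ∃ k, k + 1 = n ∧ Derivable k (Q + P + C)) : Derivable n (P + C) := by
  cases hP <;>
    simp only [Derivable, List.forall_mem_cons, List.not_mem_nil, IsEmpty.forall_iff, forall_const,
      and_true, Prod.fst_add, Prod.snd_add, zero_add, Multiset.insert_eq_cons, Multiset.cons_add,
      Multiset.singleton_add] at hQs ⊢
  case init => exact .init ..
  case lbot => exact .lbot ..
  all_goals obtain ⟨k, rfl, hQ⟩ := hQs
  case lall => exact .lall hQ
  case rex => exact .rex hQ
  case lbox => exact .lbox hQ
  case rdia => exact .rdia (Multiset.cons_swap .. ▸ hQ)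

theorem Rule.derivable (hP : Rule P e Qs) (he : Fresh e (P + C))
    (hQs : ∀ Q ∈ Qs, ∃ k, k + 1 = n ∧ Derivable k (Q + C)) : Derivable n (P + C) := by
  cases hP with
  | cumulative hP => exact hP.derivable fun Q hQ => hQs (Q + P) (List.mem_map_of_mem hQ)
  | decomp hF =>
    obtain ⟨Q, hQ⟩ := List.exists_mem_of_ne_nil Qs hF.ne_nil
    obtain ⟨k, rfl, -⟩ := hQs Q hQ
    exact hF.derivable he fun Q hQ => by simpa using hQs Q hQ

theorem Derivable.exists_rule {S : Sequent} (h : Derivable n S) :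
    ∃ P e Qs C, Rule P e Qs ∧ P + C = S ∧ Fresh e (P + C) ∧
      ∀ Q ∈ Qs, ∃ k, k + 1 = n ∧ Derivable k (Q + C) := by
  obtain ⟨Γ, Δ⟩ := S
  change Der n Γ Δ at h
  cases h
  case init w p args Γ Δ =>
    exact ⟨_, _, _, (Γ, Δ), .cumulative (.init w p args), by simp_all [Derivable]⟩
  case lbot w Γ => exact ⟨_, _, _, (Γ, Δ), .cumulative (.lbot w), by simp_all [Derivable]⟩
  case land n w A B Γ h => exact ⟨_, _, _, (Γ, Δ), .decomp (.land w A B), by simp_all [Derivable]⟩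
  case rand n w A B Δ h h' =>
    exact ⟨_, _, _, (Γ, Δ), .decomp (.rand w A B), by simp_all [Derivable]⟩
  case lor n w A B Γ h h' => exact ⟨_, _, _, (Γ, Δ), .decomp (.lor w A B), by simp_all [Derivable]⟩
  case ror n w A B Δ h => exact ⟨_, _, _, (Γ, Δ), .decomp (.ror w A B), by simp_all [Derivable]⟩
  case limp n w A B Γ h h' =>
    exact ⟨_, _, _, (Γ, Δ), .decomp (.limp w A B), by simp_all [Derivable]⟩
  case rimp n w A B Δ h => exact ⟨_, _, _, (Γ, Δ), .decomp (.rimp w A B), by simp_all [Derivable]⟩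
  case lall n w x y A Γ h =>
    exact ⟨_, _, _, (Γ, Δ), .cumulative (.lall w x y A),
      by simp_all [Derivable, -Multiset.add_cons]⟩
  case rall n w x z A Δ hz h =>
    exact ⟨_, _, _, (Γ, Δ), .decomp (.rall w x z A), by simp_all [Derivable]⟩
  case lex n w x z A Γ hz h =>
    exact ⟨_, _, _, (Γ, Δ), .decomp (.lex w x z A), by simp_all [Derivable]⟩
  case rex n w x y A Γ Δ h =>
    exact ⟨_, _, _, (Γ, Δ), .cumulative (.rex w x y A), by simp_all [Derivable, -Multiset.add_cons]⟩
  case lbox n w v A Γ h =>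
    exact ⟨_, _, _, (Γ, Δ), .cumulative (.lbox w v A), by simp_all [Derivable, -Multiset.add_cons]⟩
  case rbox n w u A Δ hu h =>
    exact ⟨_, _, _, (Γ, Δ), .decomp (.rbox w u A), by simp_all [Derivable]⟩
  case ldia n w u A Γ hu h =>
    exact ⟨_, _, _, (Γ, Δ), .decomp (.ldia w u A), by simp_all [Derivable]⟩
  case rdia n w v A Γ Δ h =>
    rw [Multiset.cons_swap] at h
    exact ⟨_, _, _, (Γ, Δ), .cumulative (.rdia w v A), by simp_all [Derivable, -Multiset.add_cons]⟩

end Inference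

section Renaming

variable {f g : ℕ → ℕ}

/-- Simultaneous renaming of all variables, bound ones included. For injective `f` this cannot
capture and commutes with the naive substitution `Fml.substV`. -/
def Fml.rename (f : ℕ → ℕ) : Fml → Fml
  | .atom P args => .atom P (args.map f)
  | .bot => .bot
  | .and A B => .and (A.rename f) (B.rename f)
  | .or A B => .or (A.rename f) (B.rename f)
  | .imp A B => .imp (A.rename f) (B.rename f)
  | .all x A => .all (f x) (A.rename f)
  | .ex x A => .ex (f x) (A.rename f)
  | .box A => .box (A.rename f)
  | .dia A => .dia (A.rename f)

/-- Renaming of variables by `f` and of labels by `g` in an antecedent item. -/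
def LSForm.rename (f g : ℕ → ℕ) : LSForm → LSForm
  | .lab w A => .lab (g w) (A.rename f)
  | .mem x w => .mem (f x) (g w)
  | .rel w v => .rel (g w) (g v)

/-- Renaming of variables by `f` and of labels by `g` in a sequent. -/
def Sequent.rename (f g : ℕ → ℕ) (S : Sequent) : Sequent :=
  (S.1.map (LSForm.rename f g), S.2.map (Prod.map g (Fml.rename f)))

/-- Renaming of variables by `f` and of labels by `g` in a signed formula. -/
def SignedFml.rename (f g : ℕ → ℕ) : SignedFml → SignedFml
  | .ante w A => .ante (g w) (A.rename f)
  | .succ w A => .succ (g w) (A.rename f)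

theorem Fml.rename_substV (hf : f.Injective) (x y : ℕ) (A : Fml) :
    (A.substV x y).rename f = (A.rename f).substV (f x) (f y) := by
  induction A with
  | atom P args => simp [substV, rename, hf.eq_iff, Function.comp_def, apply_ite f]
  | all z A ih | ex z A ih => by_cases h : z = x <;> simp [substV, rename, hf.eq_iff, h, ih]
  | _ => simp_all [substV, rename]

theorem Fml.vars_rename (f : ℕ → ℕ) (A : Fml) : (A.rename f).vars = f '' A.vars := by
  induction A with
  | atom P args => ext; simp [vars, rename]
  | _ => simp_all [vars, rename, Set.image_union, Set.image_insert_eq]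

theorem LSForm.vars_rename (f g : ℕ → ℕ) (E : LSForm) : (E.rename f g).vars = f '' E.vars := by
  cases E <;> simp [vars, rename, Fml.vars_rename]

theorem LSForm.labs_rename (f g : ℕ → ℕ) (E : LSForm) : (E.rename f g).labs = g '' E.labs := by
  cases E <;> simp [labs, rename, Set.image_insert_eq]

theorem Fml.rename_eq_self {A : Fml} (h : ∀ x ∈ A.vars, f x = x) : A.rename f = A := by
  induction A with
  | atom P args => exact congrArg _ ((List.map_congr_left h).trans (List.map_id' args))
  | _ => simp_all [vars, rename]

theorem LSForm.rename_eq_self {E : LSForm} (hf : ∀ x ∈ E.vars, f x = x)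
    (hg : ∀ w ∈ E.labs, g w = w) : E.rename f g = E := by
  cases E <;> simp_all [rename, vars, labs, Fml.rename_eq_self]

namespace Sequent

theorem rename_add (f g : ℕ → ℕ) (S T : Sequent) :
    (S + T).rename f g = S.rename f g + T.rename f g := by
  simp [rename]

theorem seqVars_rename (f g : ℕ → ℕ) (S : Sequent) :
    seqVars (S.rename f g).1 (S.rename f g).2 = f '' seqVars S.1 S.2 := by
  ext x
  simp only [rename, seqVars, LSForm.vars_rename, Fml.vars_rename, Multiset.mem_map,
    exists_exists_and_eq_and, Prod.map_snd, Set.mem_image, Set.mem_ofPred_eq]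
  aesop

theorem seqLabs_rename (f g : ℕ → ℕ) (S : Sequent) :
    seqLabs (S.rename f g).1 (S.rename f g).2 = g '' seqLabs S.1 S.2 := by
  ext w
  simp only [rename, seqLabs, LSForm.labs_rename, Multiset.mem_map, exists_exists_and_eq_and,
    Prod.map_fst, Set.mem_image, Set.mem_ofPred_eq]
  aesop

theorem names_rename (f g : ℕ → ℕ) (S : Sequent) :
    (S.rename f g).names = Sum.map f g '' S.names := by
  simp only [names, seqVars_rename, seqLabs_rename, Set.image_union, Set.image_image, Sum.map_inl,
    Sum.map_inr]

theorem rename_eq_self {S : Sequent} (h : ∀ a ∈ S.names, Sum.map f g a = a) :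
    S.rename f g = S := by
  have hvars : ∀ x ∈ seqVars S.1 S.2, f x = x := fun x hx => by simpa [hx] using h (.inl x)
  have hlabs : ∀ w ∈ seqLabs S.1 S.2, g w = w := fun w hw => by simpa [hw] using h (.inr w)
  have h₁ : ∀ E ∈ S.1, E.rename f g = E := fun E hE =>
    LSForm.rename_eq_self (fun x hx => hvars x (.inl ⟨E, hE, hx⟩))
      fun w hw => hlabs w (.inl ⟨E, hE, hw⟩)
  have h₂ : ∀ p ∈ S.2, Prod.map g (Fml.rename f) p = p := fun p hp =>
    Prod.ext (hlabs _ (.inr ⟨p, hp, rfl⟩))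
      (Fml.rename_eq_self fun x hx => hvars x (.inr ⟨p, hp, hx⟩))
  exact Prod.ext ((Multiset.map_congr rfl h₁).trans (Multiset.map_id' _))
    ((Multiset.map_congr rfl h₂).trans (Multiset.map_id' _))

end Sequent

theorem SignedFml.toSequent_rename (f g : ℕ → ℕ) (F : SignedFml) :
    (F.rename f g).toSequent = F.toSequent.rename f g := by
  cases F <;> simp [rename, toSequent, Sequent.rename, LSForm.rename]

theorem Fresh.rename {e : Option Name} {S : Sequent} (h : Fresh e S) (hf : f.Injective)
    (hg : g.Injective) : Fresh (e.map (Sum.map f g)) (S.rename f g) := by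
  simp only [Fresh, Option.mem_map, forall_exists_index, and_imp, forall_apply_eq_imp_iff₂,
    Sequent.names_rename, (hf.sumMap hg).mem_set_image]
  exact h

variable {P : Sequent} {e : Option Name} {Qs : List Sequent}

theorem Decomp.rename {F : SignedFml} (h : Decomp F e Qs) (hf : f.Injective) :
    Decomp (F.rename f g) (e.map (Sum.map f g)) (Qs.map (Sequent.rename f g)) := by
  cases h <;>
    simp only [SignedFml.rename, Fml.rename, Fml.rename_substV hf, Sequent.rename, LSForm.rename,
      Option.map_none, Option.map_some, Sum.map_inl, Sum.map_inr, Prod.map_apply, List.map_cons,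
      List.map_nil, Multiset.insert_eq_cons, Multiset.map_zero, Multiset.map_singleton,
      Multiset.map_cons] <;>
    constructor

theorem Cumulative.rename (h : Cumulative P Qs) (hf : f.Injective) :
    Cumulative (P.rename f g) (Qs.map (Sequent.rename f g)) := by
  cases h <;>
    simp only [Fml.rename, Fml.rename_substV hf, Sequent.rename, LSForm.rename, Prod.map_apply,
      List.map_cons, List.map_nil, Multiset.insert_eq_cons, Multiset.map_zero,
      Multiset.map_singleton, Multiset.map_cons] <;>
    constructor

theorem Rule.rename (h : Rule P e Qs) (hf : f.Injective) :
    Rule (P.rename f g) (e.map (Sum.map f g)) (Qs.map (Sequent.rename f g)) := by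
  cases h with
  | decomp hF => exact SignedFml.toSequent_rename f g _ ▸ .decomp (hF.rename hf)
  | cumulative hP =>
    simpa [Function.comp_def, Sequent.rename_add] using Rule.cumulative (hP.rename (g := g) hf)

theorem Derivable.rename {n : ℕ} {S : Sequent} (h : Derivable n S) (hf : f.Injective)
    (hg : g.Injective) : Derivable n (S.rename f g) := by
  induction n using Nat.strong_induction_on generalizing S with
  | _ n ih =>
    obtain ⟨P, e, Qs, C, hP, rfl, he, hQs⟩ := h.exists_rule
    rw [Sequent.rename_add]
    refine (hP.rename hf).derivable (Sequent.rename_add f g P C ▸ he.rename hf hg) ?_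
    simp only [List.forall_mem_map, ← Sequent.rename_add]
    intro Q hQ
    obtain ⟨k, rfl, hk⟩ := hQs Q hQ
    exact ⟨k, rfl, ih k k.lt_succ_self hk⟩

end Renaming

section FreshNames

theorem Name.exists_perm {a b : Name} (h : a.isLeft = b.isLeft) : ∃ f g : Equiv.Perm ℕ,
    Sum.map f g a = b ∧ ∀ c, c ≠ a → c ≠ b → Sum.map f g c = c := by
  rcases a with x | w <;> rcases b with y | v <;>
    simp only [Sum.isLeft_inl, Sum.isLeft_inr, reduceCtorEq] at h
  · refine ⟨.swap x y, .refl ℕ, by simp, ?_⟩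
    rintro (z | u) <;> simp +contextual [Equiv.swap_apply_of_ne_of_ne]
  · refine ⟨.refl ℕ, .swap w v, by simp, ?_⟩
    rintro (z | u) <;> simp +contextual [Equiv.swap_apply_of_ne_of_ne]

theorem Name.exists_notMem (a : Name) {T : Set Name} (hT : T.Finite) :
    ∃ b ∉ T, a.isLeft = b.isLeft := by
  rcases a with x | w
  · obtain ⟨y, hy⟩ := (hT.preimage Sum.inl_injective.injOn).exists_notMem
    exact ⟨.inl y, hy, rfl⟩
  · obtain ⟨v, hv⟩ := (hT.preimage Sum.inr_injective.injOn).exists_notMem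
    exact ⟨.inr v, hv, rfl⟩

variable {n : ℕ} {S : Sequent}

theorem fresh_add {e : Option Name} {T : Sequent} :
    Fresh e (S + T) ↔ Fresh e S ∧ Fresh e T := by
  simp only [Fresh, Sequent.names_add, Set.mem_union, not_or, forall₂_and]

theorem Derivable.exists_rule_fresh (h : Derivable n S) (T : Sequent) :
    ∃ P e Qs C, Rule P e Qs ∧ P + C = S ∧ Fresh e (S + T) ∧
      ∀ Q ∈ Qs, ∃ k, k + 1 = n ∧ Derivable k (Q + C) := by
  obtain ⟨P, _ | a, Qs, C, hP, rfl, he, hQs⟩ := h.exists_rule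
  · exact ⟨P, none, Qs, C, hP, rfl, by simp [Fresh], hQs⟩
  obtain ⟨b, hb, hab⟩ := Name.exists_notMem a (P + C + T).finite_names
  obtain ⟨f, g, rfl, hfix⟩ := Name.exists_perm hab
  have hPC : (P + C).rename f g = P + C := Sequent.rename_eq_self fun c hc =>
    hfix c (ne_of_mem_of_not_mem hc (he a rfl))
      (ne_of_mem_of_not_mem hc fun hS => hb (Sequent.names_add _ _ ▸ .inl hS))
  refine ⟨P.rename f g, some (Sum.map f g a), Qs.map (Sequent.rename f g), C.rename f g,
    hP.rename f.injective, by rw [← Sequent.rename_add, hPC],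
    by simpa only [Fresh, Option.mem_some_iff, forall_eq'] using hb, ?_⟩
  simp only [List.forall_mem_map, ← Sequent.rename_add]
  intro Q hQ
  obtain ⟨k, rfl, hk⟩ := hQs Q hQ
  exact ⟨k, rfl, hk.rename f.injective g.injective⟩

theorem Derivable.succ (h : Derivable n S) : Derivable (n + 1) S := by
  induction n using Nat.strong_induction_on generalizing S with
  | _ n ih =>
    obtain ⟨P, e, Qs, C, hP, rfl, he, hQs⟩ := h.exists_rule
    refine hP.derivable he fun Q hQ => ?_
    obtain ⟨k, rfl, hk⟩ := hQs Q hQ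
    exact ⟨k + 1, rfl, ih k k.lt_succ_self hk⟩

theorem Derivable.add_right (h : Derivable n S) (T : Sequent) : Derivable n (S + T) := by
  induction n using Nat.strong_induction_on generalizing S with
  | _ n ih =>
    obtain ⟨P, e, Qs, C, hP, rfl, he, hQs⟩ := h.exists_rule_fresh T
    rw [add_assoc] at he ⊢
    refine hP.derivable he fun Q hQ => ?_
    obtain ⟨k, rfl, hk⟩ := hQs Q hQ
    exact ⟨k, rfl, add_assoc Q C T ▸ ih k k.lt_succ_self hk⟩

end FreshNames

section Premisses

variable {P Q : Sequent} {F : SignedFml} {e e' : Option Name} {Qs Qs' : List Sequent}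

theorem Decomp.eigenname_mem_names {a : Name} (hF : Decomp F e Qs) (ha : a ∈ e) :
    ∀ Q ∈ Qs, a ∈ Q.names := by
  cases hF <;> cases ha <;> simp [seqVars, seqLabs, LSForm.vars, LSForm.labs]

theorem Decomp.names_subset (hF : Decomp F e Qs) :
    ∀ Q ∈ Qs, Q.names ⊆ F.toSequent.names ∪ {a | a ∈ e} := by
  cases hF <;>
    simp only [List.forall_mem_cons, List.not_mem_nil, IsEmpty.forall_iff, implies_true,
      Set.subset_def, Sum.forall, Sequent.inl_mem_names, Sequent.inr_mem_names, seqVars, seqLabs,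
      LSForm.vars, LSForm.labs, Fml.vars, SignedFml.toSequent, Multiset.insert_eq_cons,
      Multiset.mem_cons, Multiset.mem_singleton, Multiset.notMem_zero, Set.mem_union,
      Set.mem_ofPred_eq, exists_eq_or_imp, exists_eq_left, false_and, exists_false, or_false,
      false_or]
  all_goals grind [Fml.vars_substV_subset]

theorem Cumulative.names_subset (hP : Cumulative P Qs) :
    ∀ Q ∈ Qs, Q.names ⊆ P.names := by
  cases hP <;>
    simp only [List.forall_mem_cons, List.not_mem_nil, IsEmpty.forall_iff, implies_true,
      Set.subset_def, Sum.forall, Sequent.inl_mem_names, Sequent.inr_mem_names, seqVars, seqLabs,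
      LSForm.vars, LSForm.labs, Fml.vars, Multiset.insert_eq_cons, Multiset.mem_cons,
      Multiset.mem_singleton, Multiset.notMem_zero, Set.mem_ofPred_eq, exists_eq_or_imp,
      exists_eq_left, false_and, exists_false, or_false, false_or]
  all_goals grind [Fml.vars_substV_subset]

theorem Rule.names_subset (hP : Rule P e Qs) (hQ : Q ∈ Qs) :
    Q.names ⊆ P.names ∪ {a | a ∈ e} := by
  cases hP with
  | decomp hF => exact hF.names_subset Q hQ
  | cumulative hP =>
    obtain ⟨A, hA, rfl⟩ := List.mem_map.1 hQ
    simpa [Sequent.names_add] using hP.names_subset A hA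

theorem Decomp.unique (hF : Decomp F e Qs) (hF' : Decomp F e Qs') : Qs = Qs' := by
  cases hF <;> cases hF' <;> rfl

theorem Decomp.map_isLeft_eq (hF : Decomp F e Qs) (hF' : Decomp F e' Qs') :
    e.map Sum.isLeft = e'.map Sum.isLeft := by
  cases hF <;> cases hF' <;> rfl

namespace SignedFml

theorem toSequent_injective : toSequent.Injective := by
  rintro ⟨⟩ ⟨⟩ <;> simp [toSequent]

theorem toSequent_le_toSequent {F F' : SignedFml} : F.toSequent ≤ F'.toSequent ↔ F = F' := by
  cases F <;> cases F' <;> simp [toSequent, Prod.le_def]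

theorem toSequent_le_add {S T : Sequent} :
    F.toSequent ≤ S + T ↔ F.toSequent ≤ S ∨ F.toSequent ≤ T := by
  cases F <;> simp [toSequent, Prod.le_def]

end SignedFml

theorem Decomp.not_toSequent_le (hF : Decomp F e Qs) (hP : Cumulative P Qs') :
    ¬ F.toSequent ≤ P := by
  cases hF <;> cases hP <;> simp [SignedFml.toSequent, Prod.le_def]

theorem Rule.eq_of_toSequent_le (hP : Rule P e' Qs') (hF : Decomp F e Qs)
    (hFP : F.toSequent ≤ P) : P = F.toSequent ∧ Decomp F e' Qs' := by
  cases hP with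
  | decomp hF' =>
    obtain rfl := SignedFml.toSequent_le_toSequent.1 hFP
    exact ⟨rfl, hF'⟩
  | cumulative hP => exact absurd hFP (hF.not_toSequent_le hP)

end Premisses

section Inversion

variable {n : ℕ} {P C Q : Sequent} {F : SignedFml} {e e' : Option Name} {Qs Qs' : List Sequent}

theorem Decomp.exists_perm (hF : Decomp F e Qs) (hF' : Decomp F e' Qs') :
    ∃ f g : Equiv.Perm ℕ, e'.map (Sum.map f g) = e ∧ ∀ c ∉ e, c ∉ e' → Sum.map f g c = c := by
  have h := hF'.map_isLeft_eq hF
  rcases e with _ | b <;> rcases e' with _ | a <;>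
    simp only [Option.map_some, Option.map_none, Option.some.injEq, reduceCtorEq] at h
  · exact ⟨.refl ℕ, .refl ℕ, by simp⟩
  · obtain ⟨f, g, rfl, hfix⟩ := Name.exists_perm h
    exact ⟨f, g, rfl, fun c hb ha =>
      hfix c (by simpa [eq_comm] using ha) (by simpa [eq_comm] using hb)⟩

theorem Decomp.derivable_of_eigenname (hF : Decomp F e Qs) (hF' : Decomp F e' Qs')
    (he : Fresh e (F.toSequent + C)) (he' : Fresh e' (F.toSequent + C))
    (h : ∀ Q ∈ Qs', Derivable n (Q + C)) (hQ : Q ∈ Qs) : Derivable n (Q + C) := by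
  obtain ⟨f, g, rfl, hfix⟩ := hF.exists_perm hF'
  have hfix : ∀ c ∈ (F.toSequent + C).names, Sum.map f g c = c := fun c hc =>
    hfix c (fun hce => he c hce hc) fun hce => he' c hce hc
  simp only [Sequent.names_add, Set.mem_union, or_imp, forall_and] at hfix
  have hFfix : F.rename f g = F := SignedFml.toSequent_injective <| by
    rw [SignedFml.toSequent_rename, Sequent.rename_eq_self hfix.1]
  obtain rfl : Qs = _ := hF.unique (hFfix ▸ hF'.rename f.injective)
  obtain ⟨Q, hQ', rfl⟩ := List.mem_map.1 hQ
  rw [← Sequent.rename_eq_self hfix.2, ← Sequent.rename_add]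
  exact (h Q hQ').rename f.injective g.injective

theorem Decomp.invert (hF : Decomp F e Qs) (he : Fresh e (F.toSequent + C))
    (h : Derivable n (F.toSequent + C)) (hQ : Q ∈ Qs) : Derivable n (Q + C) := by
  induction n using Nat.strong_induction_on generalizing C with
  | _ n ih =>
    obtain ⟨P, e', Qs', C', hP, hS, he', hQs'⟩ := h.exists_rule_fresh Q
    rcases SignedFml.toSequent_le_add.1 (hS ▸ le_self_add : F.toSequent ≤ P + C') with hFP | hFC
    · obtain ⟨rfl, hF'⟩ := hP.eq_of_toSequent_le hF hFP
      obtain rfl := add_left_cancel hS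
      refine hF.derivable_of_eigenname hF' he (fresh_add.1 he').1 (fun Q' hQ' => ?_) hQ
      obtain ⟨k, rfl, hk⟩ := hQs' Q' hQ'
      exact hk.succ
    · obtain ⟨D, rfl⟩ := exists_add_of_le hFC
      obtain rfl : P + D = C := add_left_cancel ((add_left_comm ..).trans hS)
      simp only [fresh_add] at he he'
      rw [add_left_comm]
      refine hP.derivable (by simp only [fresh_add]; tauto) fun Q' hQ' => ?_
      obtain ⟨k, rfl, hk⟩ := hQs' Q' hQ'
      refine ⟨k, rfl, ?_⟩
      have heQ' : Fresh e Q' := fun a ha haQ' => (hP.names_subset hQ' haQ').elim (he.2.1 a ha)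
        fun ha' => he'.2 a ha' (hF.eigenname_mem_names ha Q hQ)
      rw [add_left_comm] at hk ⊢
      exact ih k k.lt_succ_self (by simp only [fresh_add]; tauto) hk

theorem Rule.invert (hP : Rule P e Qs) (n : ℕ) (Γ : Multiset LSForm) (Δ : Multiset (ℕ × Fml))
    (he : Fresh e (P + (Γ, Δ))) (h : Der n (P.1 + Γ) (P.2 + Δ)) :
    ∀ Q ∈ Qs, Der n (Q.1 + Γ) (Q.2 + Δ) := by
  cases hP with
  | decomp hF => exact fun Q => hF.invert (C := (Γ, Δ)) he h
  | @cumulative P _ hP =>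
    simp only [List.forall_mem_map]
    intro Q _
    have hPQ : Derivable n (P + (Γ, Δ) + Q) := Derivable.add_right (S := P + (Γ, Δ)) h Q
    rwa [add_comm, ← add_assoc] at hPQ

end Inversion

/-- every rule of G3Q.K is height-preserving invertible: if the
conclusion of a rule instance is derivable with height at most `n`, then each
premiss is derivable with height at most `n` (for rules with eigenvariable
conditions, for any choice of fresh eigenvariable). -/
theorem all_rules_hp_invertible (n : ℕ) :
    -- L∧
    (∀ w A B (Γ : Multiset LSForm) (Δ : Multiset (ℕ × Fml)),
      Der n (.lab w (.and A B) ::ₘ Γ) Δ → Der n (.lab w A ::ₘ .lab w B ::ₘ Γ) Δ) ∧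
    -- R∧
    (∀ w A B (Γ : Multiset LSForm) (Δ : Multiset (ℕ × Fml)),
      Der n Γ ((w, .and A B) ::ₘ Δ) →
        Der n Γ ((w, A) ::ₘ Δ) ∧ Der n Γ ((w, B) ::ₘ Δ)) ∧
    -- L∨
    (∀ w A B (Γ : Multiset LSForm) (Δ : Multiset (ℕ × Fml)),
      Der n (.lab w (.or A B) ::ₘ Γ) Δ →
        Der n (.lab w A ::ₘ Γ) Δ ∧ Der n (.lab w B ::ₘ Γ) Δ) ∧
    -- R∨
    (∀ w A B (Γ : Multiset LSForm) (Δ : Multiset (ℕ × Fml)),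
      Der n Γ ((w, .or A B) ::ₘ Δ) → Der n Γ ((w, A) ::ₘ (w, B) ::ₘ Δ)) ∧
    -- L⊃
    (∀ w A B (Γ : Multiset LSForm) (Δ : Multiset (ℕ × Fml)),
      Der n (.lab w (.imp A B) ::ₘ Γ) Δ →
        Der n Γ ((w, A) ::ₘ Δ) ∧ Der n (.lab w B ::ₘ Γ) Δ) ∧
    -- R⊃
    (∀ w A B (Γ : Multiset LSForm) (Δ : Multiset (ℕ × Fml)),
      Der n Γ ((w, .imp A B) ::ₘ Δ) → Der n (.lab w A ::ₘ Γ) ((w, B) ::ₘ Δ)) ∧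
    -- L∀
    (∀ w x y A (Γ : Multiset LSForm) (Δ : Multiset (ℕ × Fml)),
      Der n (.mem y w ::ₘ .lab w (.all x A) ::ₘ Γ) Δ →
        Der n (.lab w (A.substV x y) ::ₘ .mem y w ::ₘ .lab w (.all x A) ::ₘ Γ) Δ) ∧
    -- R∀ (eigenvariable z)
    (∀ w x z A (Γ : Multiset LSForm) (Δ : Multiset (ℕ × Fml)),
      z ∉ seqVars Γ ((w, .all x A) ::ₘ Δ) →
      Der n Γ ((w, .all x A) ::ₘ Δ) →
        Der n (.mem z w ::ₘ Γ) ((w, A.substV x z) ::ₘ Δ)) ∧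
    -- L∃ (eigenvariable z)
    (∀ w x z A (Γ : Multiset LSForm) (Δ : Multiset (ℕ × Fml)),
      z ∉ seqVars (.lab w (.ex x A) ::ₘ Γ) Δ →
      Der n (.lab w (.ex x A) ::ₘ Γ) Δ →
        Der n (.mem z w ::ₘ .lab w (A.substV x z) ::ₘ Γ) Δ) ∧
    -- R∃
    (∀ w x y A (Γ : Multiset LSForm) (Δ : Multiset (ℕ × Fml)),
      Der n (.mem y w ::ₘ Γ) ((w, .ex x A) ::ₘ Δ) →
        Der n (.mem y w ::ₘ Γ) ((w, A.substV x y) ::ₘ (w, .ex x A) ::ₘ Δ)) ∧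
    -- L□
    (∀ w v A (Γ : Multiset LSForm) (Δ : Multiset (ℕ × Fml)),
      Der n (.rel w v ::ₘ .lab w (.box A) ::ₘ Γ) Δ →
        Der n (.lab v A ::ₘ .rel w v ::ₘ .lab w (.box A) ::ₘ Γ) Δ) ∧
    -- R□ (eigenlabel u)
    (∀ w u A (Γ : Multiset LSForm) (Δ : Multiset (ℕ × Fml)),
      u ∉ seqLabs Γ ((w, .box A) ::ₘ Δ) →
      Der n Γ ((w, .box A) ::ₘ Δ) →
        Der n (.rel w u ::ₘ Γ) ((u, A) ::ₘ Δ)) ∧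
    -- L◇ (eigenlabel u)
    (∀ w u A (Γ : Multiset LSForm) (Δ : Multiset (ℕ × Fml)),
      u ∉ seqLabs (.lab w (.dia A) ::ₘ Γ) Δ →
      Der n (.lab w (.dia A) ::ₘ Γ) Δ →
        Der n (.rel w u ::ₘ .lab u A ::ₘ Γ) Δ) ∧
    -- R◇
    (∀ w v A (Γ : Multiset LSForm) (Δ : Multiset (ℕ × Fml)),
      Der n (.rel w v ::ₘ Γ) ((w, .dia A) ::ₘ Δ) →
        Der n (.rel w v ::ₘ Γ) ((w, .dia A) ::ₘ (v, A) ::ₘ Δ)) := by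
  exact ⟨
    fun w A B Γ Δ h => by simpa [h] using (Rule.decomp (.land w A B)).invert n Γ Δ,
    fun w A B Γ Δ h => by simpa [h] using (Rule.decomp (.rand w A B)).invert n Γ Δ,
    fun w A B Γ Δ h => by simpa [h] using (Rule.decomp (.lor w A B)).invert n Γ Δ,
    fun w A B Γ Δ h => by simpa [h] using (Rule.decomp (.ror w A B)).invert n Γ Δ,
    fun w A B Γ Δ h => by simpa [h] using (Rule.decomp (.limp w A B)).invert n Γ Δ,
    fun w A B Γ Δ h => by simpa [h] using (Rule.decomp (.rimp w A B)).invert n Γ Δ,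
    fun w x y A Γ Δ h => by
      simpa [h, -Multiset.add_cons] using (Rule.cumulative (.lall w x y A)).invert n Γ Δ,
    fun w x z A Γ Δ hz h => by simpa [h, hz] using (Rule.decomp (.rall w x z A)).invert n Γ Δ,
    fun w x z A Γ Δ hz h => by simpa [h, hz] using (Rule.decomp (.lex w x z A)).invert n Γ Δ,
    fun w x y A Γ Δ h => by
      simpa [h, -Multiset.add_cons] using (Rule.cumulative (.rex w x y A)).invert n Γ Δ,
    fun w v A Γ Δ h => by
      simpa [h, -Multiset.add_cons] using (Rule.cumulative (.lbox w v A)).invert n Γ Δ,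
    fun w u A Γ Δ hu h => by simpa [h, hu] using (Rule.decomp (.rbox w u A)).invert n Γ Δ,
    fun w u A Γ Δ hu h => by simpa [h, hu] using (Rule.decomp (.ldia w u A)).invert n Γ Δ,
    fun w v A Γ Δ h => by
      simpa [h, Multiset.cons_swap] using (Rule.cumulative (.rdia w v A)).invert n Γ Δ⟩
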